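/- Assume that g_2(t) and g_3(t) are algebraic over C(t). Then for every rational number lambda that is not an integer, the functions t -> wp(lambda omega_1(t), t) and t -> (d wp/d omega)(lambda omega_1(t), t) are algebraic over C(t). The same conclusion holds with omega_1 replaced by omega_2. -/

import Mathlib

open scoped BigOperators

namespace WeierstrassElliptic

/-- The lattice `ℤω₁ + ℤω₂ ⊆ ℂ`. -/
def latticeSet (ω₁ ω₂ : ℂ) : Set ℂ :=
  {z | ∃ m n : ℤ, z = (m : ℂ) * ω₁ + (n : ℂ) * ω₂}

/-- The point of the lattice indexed by `p ∈ ℤ × ℤ`. -/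
def latPt (ω₁ ω₂ : ℂ) (p : ℤ × ℤ) : ℂ := (p.1 : ℂ) * ω₁ + (p.2 : ℂ) * ω₂

/-- The Weierstrass `℘`-function of the lattice `ℤω₁ + ℤω₂`:
`℘(z) = z⁻² + ∑_{λ ∈ Λ, λ ≠ 0} ((z+λ)⁻² - λ⁻²)`. -/
noncomputable def wp (ω₁ ω₂ : ℂ) (z : ℂ) : ℂ :=
  (z ^ 2)⁻¹ + ∑' p : ℤ × ℤ,
    if p = 0 then 0
    else ((z + latPt ω₁ ω₂ p) ^ 2)⁻¹ - ((latPt ω₁ ω₂ p) ^ 2)⁻¹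

/-- The invariant `g₂ = 60 ∑_{λ ∈ Λ, λ ≠ 0} λ⁻⁴`. -/
noncomputable def g2 (ω₁ ω₂ : ℂ) : ℂ :=
  60 * ∑' p : ℤ × ℤ, if p = 0 then 0 else ((latPt ω₁ ω₂ p) ^ 4)⁻¹

/-- The invariant `g₃ = 140 ∑_{λ ∈ Λ, λ ≠ 0} λ⁻⁶`. -/
noncomputable def g3 (ω₁ ω₂ : ℂ) : ℂ :=
  140 * ∑' p : ℤ × ℤ, if p = 0 then 0 else ((latPt ω₁ ω₂ p) ^ 6)⁻¹

/-- The Weierstrass `ζ`-function: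
`ζ(z) = z⁻¹ + ∑_{λ ∈ Λ, λ ≠ 0} ((z-λ)⁻¹ + λ⁻¹ + z λ⁻²)`. -/
noncomputable def wzeta (ω₁ ω₂ : ℂ) (z : ℂ) : ℂ :=
  z⁻¹ + ∑' p : ℤ × ℤ,
    if p = 0 then 0
    else (z - latPt ω₁ ω₂ p)⁻¹ + (latPt ω₁ ω₂ p)⁻¹ + z * ((latPt ω₁ ω₂ p) ^ 2)⁻¹

/-- A function `c : (0,1) → ℂ` (defined on all of `ℝ`, but only its restriction to `(0,1)`
matters) is algebraic over `ℂ(t)` if there is a nonzero polynomial `P ∈ ℂ[T,Z]` with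
`P(t, c(t)) = 0` for all `t ∈ (0,1)`.  Here `T = X 0` and `Z = X 1`. -/
def AlgebraicOverCt (c : ℝ → ℂ) : Prop :=
  ∃ P : MvPolynomial (Fin 2) ℂ, P ≠ 0 ∧
    ∀ t ∈ Set.Ioo (0 : ℝ) 1, MvPolynomial.eval ![(t : ℂ), c t] P = 0

/-- Membership in the set `X`: `b : (0,1) → ℂ` is such that for every `t`, either `b(t)`
lies in the lattice `Λ(t)` (a pole of `℘`), or `t ↦ ℘(b(t),t)` is algebraic over `ℂ(t)`. -/
def MemX (ω₁ ω₂ b : ℝ → ℂ) : Prop :=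
  ∀ t ∈ Set.Ioo (0 : ℝ) 1,
    b t ∈ latticeSet (ω₁ t) (ω₂ t) ∨
      AlgebraicOverCt (fun s => wp (ω₁ s) (ω₂ s) (b s))

end WeierstrassElliptic

namespace WeierstrassElliptic

section Helpers

open Polynomial

/-- Numerators and denominators of multiplication by `k+1`, and by `k+2`. -/
noncomputable def mulPQ {R : Type*} [CommRing R] (a b : R) : ℕ → (R[X] × R[X]) × (R[X] × R[X])
  | 0 => ((X, 1), ((X ^ 2 + C a) ^ 2 + 2 * C b * X, 4 * X ^ 3 - 4 * C a * X - C b))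
  | k + 1 =>
    let u := (mulPQ a b k).1
    let v := (mulPQ a b k).2
    (v, (((v.1 * X + C a * v.2) ^ 2 + C b * v.2 * (v.1 + X * v.2)) * u.2,
      (v.1 - X * v.2) ^ 2 * u.1))

lemma mulPQ_succ_fst {R : Type*} [CommRing R] (a b : R) (k : ℕ) :
    (mulPQ a b (k + 1)).1 = (mulPQ a b k).2 := rfl

lemma mulPQ_map {R S : Type*} [CommRing R] [CommRing S] (f : R →+* S) (a b : R) (k : ℕ) :
    ((mulPQ a b k).1.1.map f = (mulPQ (f a) (f b) k).1.1 ∧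
     (mulPQ a b k).1.2.map f = (mulPQ (f a) (f b) k).1.2) ∧
    ((mulPQ a b k).2.1.map f = (mulPQ (f a) (f b) k).2.1 ∧
     (mulPQ a b k).2.2.map f = (mulPQ (f a) (f b) k).2.2) := by
  induction k with
  | zero => simp [mulPQ]
  | succ k ih =>
    obtain ⟨⟨h1, h2⟩, h3, h4⟩ := ih
    simp [mulPQ, h1, h2, h3, h4]

def GoodPair {R : Type*} [CommRing R] (n : ℤ) (u : R[X] × R[X]) : Prop :=
  ∃ (d : ℕ) (p : ℤ), p ≠ 0 ∧ u.1.natDegree ≤ d + 1 ∧ u.2.natDegree ≤ d ∧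
    u.1.coeff (d + 1) = (p : R) ∧ u.2.coeff d = ((n ^ 2 * p : ℤ) : R)

lemma nd_add {R : Type*} [CommRing R] {p q : R[X]} {n : ℕ} (hp : p.natDegree ≤ n)
    (hq : q.natDegree ≤ n) : (p + q).natDegree ≤ n := natDegree_add_le_of_degree_le hp hq

lemma good_step {R : Type*} [CommRing R] (a b : R) (n : ℤ) (hn : 2 ≤ n) (u v : R[X] × R[X])
    (hu : GoodPair (n - 1) u) (hv : GoodPair n v) :
    GoodPair (n + 1) (((v.1 * X + C a * v.2) ^ 2 + C b * v.2 * (v.1 + X * v.2)) * u.2,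
      (v.1 - X * v.2) ^ 2 * u.1) := by
  obtain ⟨d, p, hp, h1, h2, h3, h4⟩ := hv
  obtain ⟨e, q, hq, k1, k2, k3, k4⟩ := hu
  have w1 : (v.1 * X).natDegree ≤ d + 2 := by
    simpa using natDegree_mul_le_of_le h1 (natDegree_X_le (R := R))
  have w2 : (C a * v.2).natDegree ≤ d + 1 := (natDegree_C_mul_le _ _).trans (by lia)
  have c1 : (v.1 * X + C a * v.2).coeff (d + 2) = (p : R) := by
    rw [coeff_add, coeff_mul_X, h3, coeff_eq_zero_of_natDegree_lt (lt_of_le_of_lt w2 (by lia)), add_zero]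
  have w3 : (v.1 * X + C a * v.2).natDegree ≤ d + 2 := nd_add w1 (w2.trans (by lia))
  have w4 : ((v.1 * X + C a * v.2) ^ 2).natDegree ≤ 2 * (d + 2) := natDegree_pow_le_of_le 2 w3
  have c4 : ((v.1 * X + C a * v.2) ^ 2).coeff (2 * (d + 2)) = (p : R) ^ 2 := by
    rw [coeff_pow_of_natDegree_le w3, c1]
  have w5 : (X * v.2).natDegree ≤ d + 1 := by
    have := natDegree_mul_le_of_le (natDegree_X_le (R := R)) h2
    lia
  have w6 : (C b * v.2 * (v.1 + X * v.2)).natDegree ≤ d + (d + 1) :=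
    natDegree_mul_le_of_le ((natDegree_C_mul_le _ _).trans h2) (nd_add h1 w5)
  have w7 : ((v.1 * X + C a * v.2) ^ 2 + C b * v.2 * (v.1 + X * v.2)).natDegree ≤ 2 * (d + 2) :=
    nd_add w4 (w6.trans (by lia))
  have c7 : ((v.1 * X + C a * v.2) ^ 2 + C b * v.2 * (v.1 + X * v.2)).coeff (2 * (d + 2))
      = (p : R) ^ 2 := by
    rw [coeff_add, c4, coeff_eq_zero_of_natDegree_lt (lt_of_le_of_lt w6 (by lia)), add_zero]
  have w8 : (v.1 - X * v.2).natDegree ≤ d + 1 := natDegree_sub_le_of_le h1 w5 |>.trans (by simp)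
  have c8 : (v.1 - X * v.2).coeff (d + 1) = ((p - n ^ 2 * p : ℤ) : R) := by
    rw [coeff_sub, coeff_X_mul, h3, h4]; push_cast; ring
  have w9 : ((v.1 - X * v.2) ^ 2).natDegree ≤ 2 * (d + 1) := natDegree_pow_le_of_le 2 w8
  have c9 : ((v.1 - X * v.2) ^ 2).coeff (2 * (d + 1)) = ((p - n ^ 2 * p : ℤ) : R) ^ 2 := by
    rw [coeff_pow_of_natDegree_le w8, c8]
  refine ⟨2 * (d + 1) + (e + 1), p ^ 2 * ((n - 1) ^ 2 * q), ?_, ?_, ?_, ?_, ?_⟩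
  · have : n - 1 ≠ 0 := by lia
    positivity
  · exact (natDegree_mul_le_of_le w7 k2).trans (by lia)
  · exact natDegree_mul_le_of_le w9 k1
  · have := coeff_mul_add_eq_of_natDegree_le w7 k2
    rw [c7, k4] at this
    rw [show 2 * (d + 1) + (e + 1) + 1 = 2 * (d + 2) + e by ring]
    dsimp only
    rw [this]; push_cast; ring
  · have := coeff_mul_add_eq_of_natDegree_le w9 k1
    rw [c9, k3] at this
    dsimp only
    rw [this]; push_cast; ring

lemma mulPQ_good {R : Type*} [CommRing R] (a b : R) (k : ℕ) :
    GoodPair (k + 1) (mulPQ a b k).1 ∧ GoodPair (k + 2) (mulPQ a b k).2 := by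
  induction k with
  | zero =>
    constructor
    · refine ⟨0, 1, one_ne_zero, ?_, ?_, ?_, ?_⟩ <;> simp [mulPQ, natDegree_X_le]
    · refine ⟨3, 1, one_ne_zero, ?_, ?_, ?_, ?_⟩
      · simp only [mulPQ]; compute_degree
      · simp only [mulPQ]; compute_degree
      · have : (X ^ 2 + C a) ^ 2 + 2 * C b * X
          = X ^ 4 + C (2 * a) * X ^ 2 + C (2 * b) * X + C (a ^ 2) := by
          simp only [map_mul, map_pow, map_ofNat]; ring
        simp only [mulPQ]; rw [this]
        simp only [coeff_add, coeff_X_pow, coeff_C_mul, coeff_X, coeff_C]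
        norm_num
      · have : 4 * X ^ 3 - 4 * C a * X - C b
          = C 4 * X ^ 3 - C (4 * a) * X - C b := by
          simp only [map_mul, map_pow, map_ofNat]
        simp only [mulPQ]; rw [this]
        simp only [coeff_sub, coeff_X_pow, coeff_C_mul, coeff_X, coeff_C]
        norm_num
  | succ k ih =>
    refine ⟨?_, ?_⟩
    · rw [mulPQ_succ_fst]
      convert ih.2 using 1
      push_cast; ring
    · have := good_step a b (k + 2) (by lia) _ _ (by convert ih.1 using 1; ring) ih.2
      rw [show ((k + 1 : ℕ) : ℤ) + 2 = (k : ℤ) + 2 + 1 by push_cast; ring]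
      exact this

/-- key identity step -/
lemma mulPQ_eval (a b x : ℂ) (w : ℕ → ℂ) (K : ℕ) (h0 : w 0 = x)
    (h1 : 1 ≤ K → w 1 * (4 * x ^ 3 - 4 * a * x - b) = (x ^ 2 + a) ^ 2 + 2 * b * x)
    (h : ∀ k, k + 2 ≤ K → w (k + 2) * w k * (w (k + 1) - x) ^ 2
      = (w (k + 1) * x + a) ^ 2 + b * (w (k + 1) + x)) (k : ℕ) :
    (k ≤ K → (mulPQ a b k).1.1.eval x = w k * (mulPQ a b k).1.2.eval x) ∧
    (k + 1 ≤ K → (mulPQ a b k).2.1.eval x = w (k + 1) * (mulPQ a b k).2.2.eval x) := by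
  induction k with
  | zero =>
    constructor
    · simp [mulPQ, h0]
    · intro hk
      simp [mulPQ, h1 hk]
  | succ k ih =>
    refine ⟨fun hk => ih.2 hk, fun hk => ?_⟩
    have e1 := ih.1 (by lia)
    have e2 := ih.2 (by lia)
    have e3 := h k hk
    simp only [mulPQ, eval_add, eval_mul, eval_pow, eval_sub, eval_X, eval_C]
    rw [e1, e2]
    linear_combination (-(eval x (mulPQ a b k).2.2) ^ 2 * (eval x (mulPQ a b k).1.2)) * e3

noncomputable def evHom : ℂ[X] →+* (Set.Ioo (0 : ℝ) 1 → ℂ) :=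
  RingHom.pi fun t => evalRingHom (((t : ℝ)) : ℂ)

noncomputable abbrev evAlg : Algebra ℂ[X] (Set.Ioo (0 : ℝ) 1 → ℂ) := evHom.toAlgebra

noncomputable def mvToPoly : MvPolynomial (Fin 2) ℂ →+* ℂ[X][X] :=
  MvPolynomial.eval₂Hom (C.comp C) ![C X, X]

noncomputable def polyToMv : ℂ[X][X] →+* MvPolynomial (Fin 2) ℂ :=
  eval₂RingHom (eval₂RingHom MvPolynomial.C (MvPolynomial.X 0)) (MvPolynomial.X 1)

lemma polyToMv_mvToPoly (P) : polyToMv (mvToPoly P) = P := by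
  have : polyToMv.comp mvToPoly = RingHom.id _ := by
    apply MvPolynomial.ringHom_ext
    · intro r; simp [polyToMv, mvToPoly]
    · intro i; fin_cases i <;> simp [polyToMv, mvToPoly]
  exact congr($this P)

lemma mvToPoly_polyToMv (P) : mvToPoly (polyToMv P) = P := by
  have : mvToPoly.comp polyToMv = RingHom.id _ := by
    apply Polynomial.ringHom_ext'
    · apply Polynomial.ringHom_ext'
      · ext r : 1; simp [polyToMv, mvToPoly]
      · simp [polyToMv, mvToPoly]
    · simp [polyToMv, mvToPoly]
  exact congr($this P)

lemma eval_mvToPoly (c : ℝ → ℂ) (t : Set.Ioo (0 : ℝ) 1) (P : MvPolynomial (Fin 2) ℂ) :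
    eval₂ evHom (fun s : Set.Ioo (0 : ℝ) 1 => c s) (mvToPoly P) t
      = MvPolynomial.eval ![((t : ℝ) : ℂ), c t] P := by
  have : ((Pi.evalRingHom (fun _ => ℂ) t).comp
      ((eval₂RingHom evHom (fun s : Set.Ioo (0 : ℝ) 1 => c s)).comp mvToPoly))
      = MvPolynomial.eval ![((t : ℝ) : ℂ), c t] := by
    apply MvPolynomial.ringHom_ext
    · intro r; simp [mvToPoly, evHom]
    · intro i; fin_cases i <;> simp [mvToPoly, evHom]
  exact congr($this P)

lemma algebraicOverCt_iff (c : ℝ → ℂ) : AlgebraicOverCt c ↔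
    letI := evAlg
    IsAlgebraic ℂ[X] (fun s : Set.Ioo (0 : ℝ) 1 => c s) := by
  letI := evAlg
  constructor
  · rintro ⟨P, hP, h⟩
    refine ⟨mvToPoly P, fun h0 => hP ?_, ?_⟩
    · rw [← polyToMv_mvToPoly P, h0, map_zero]
    · ext t
      exact (eval_mvToPoly c t P).trans (h t t.2)
  · rintro ⟨P, hP, h⟩
    refine ⟨polyToMv P, fun h0 => hP ?_, fun t ht => ?_⟩
    · rw [← mvToPoly_polyToMv P, h0, map_zero]
    · rw [← eval_mvToPoly c ⟨t, ht⟩, mvToPoly_polyToMv]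
      exact congrFun h ⟨t, ht⟩

open scoped TensorProduct in
lemma trans_alg {R A : Type*} [CommRing R] [IsDomain R] [CommRing A] [Algebra R A] {x : A}
    (hx : IsIntegral (Subalgebra.algebraicClosure R A) x) : IsAlgebraic R x := by
  let K := FractionRing R
  let B := K ⊗[R] A
  let ι : A →ₐ[R] B := Algebra.TensorProduct.includeRight
  -- elements of the algebraic closure become integral over `K`
  have h1 : ∀ s : A, IsAlgebraic R s → IsIntegral K (ι s) := by
    intro s hs
    have := hs.algHom ι
    exact ((IsFractionRing.isAlgebraic_iff R K B).mp this).isIntegral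
  have h2 : IsIntegral K (ι x) := by
    obtain ⟨p, hp, hpx⟩ := hx
    let f : Subalgebra.algebraicClosure R A →+* integralClosure K B :=
      ((ι : A →+* B).comp (algebraMap (Subalgebra.algebraicClosure R A) A)).codRestrict
        (integralClosure K B) (fun s => h1 s s.2)
    have h3 : IsIntegral (integralClosure K B) (ι x) := by
      refine ⟨p.map f, hp.map f, ?_⟩
      rw [eval₂_map]
      have : (algebraMap (integralClosure K B) B).comp f
        = (ι : A →+* B).comp (algebraMap (Subalgebra.algebraicClosure R A) A) := by
        ext s; rfl
      rw [this]
      have := congrArg (ι : A →+* B) hpx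
      rwa [hom_eval₂, map_zero] at this
    exact isIntegral_trans _ h3
  have h4 : IsAlgebraic R (ι x) := (IsFractionRing.isAlgebraic_iff R K B).mpr h2.isAlgebraic
  obtain ⟨p, hp, hpx⟩ := h4
  rw [aeval_algHom_apply] at hpx
  obtain ⟨s, hs⟩ := (IsLocalizedModule.eq_zero_iff (nonZeroDivisors R)
    (TensorProduct.mk R K A 1)).mp hpx
  refine ⟨C (s : R) * p, mul_ne_zero (by simp) hp, ?_⟩
  rw [map_mul, aeval_C, ← Algebra.smul_def]
  exact hs

lemma algebraic_final (g2 g3 x y : ℝ → ℂ) (N : ℕ)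
    (h2 : AlgebraicOverCt g2) (h3 : AlgebraicOverCt g3)
    (hx : ∀ t ∈ Set.Ioo (0 : ℝ) 1, (mulPQ (g2 t / 4) (g3 t) N).1.2.eval (x t) = 0)
    (hy : ∀ t ∈ Set.Ioo (0 : ℝ) 1, y t ^ 2 = 4 * x t ^ 3 - g2 t * x t - g3 t) :
    AlgebraicOverCt x ∧ AlgebraicOverCt y := by
  letI := evAlg
  rw [algebraicOverCt_iff] at h2 h3 ⊢
  rw [algebraicOverCt_iff]
  let S := Subalgebra.algebraicClosure ℂ[X] (Set.Ioo (0 : ℝ) 1 → ℂ)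
  let x' : Set.Ioo (0 : ℝ) 1 → ℂ := fun s => x s
  let y' : Set.Ioo (0 : ℝ) 1 → ℂ := fun s => y s
  let a : S := algebraMap ℂ[X] S (C (1 / 4)) * ⟨_, h2⟩
  let b : S := ⟨_, h3⟩
  have hxi : IsIntegral S x' := by
    obtain ⟨d, p, hp, -, h1, -, h2'⟩ := (mulPQ_good a b N).1
    set Q := (mulPQ a b N).1.2 with hQ
    set q : ℤ := ((N : ℤ) + 1) ^ 2 * p with hq
    have hq0 : (q : ℂ) ≠ 0 := by
      have : (N : ℤ) + 1 ≠ 0 := by lia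
      have : q ≠ 0 := by positivity
      exact_mod_cast this
    refine ⟨C (algebraMap ℂ[X] S (C (q : ℂ)⁻¹)) * Q, ?_, ?_⟩
    · refine monic_of_natDegree_le_of_coeff_eq_one d ((natDegree_C_mul_le _ _).trans h1) ?_
      rw [coeff_C_mul, h2', ← map_intCast (algebraMap ℂ[X] S), ← map_mul,
        ← map_intCast (C : ℂ →+* ℂ[X]), ← map_mul, inv_mul_cancel₀ hq0, map_one, map_one]
    · rw [eval₂_mul]
      convert mul_zero _
      ext t
      have e := ((mulPQ_map ((Pi.evalRingHom (fun _ => ℂ) t).comp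
        (algebraMap S (Set.Ioo (0 : ℝ) 1 → ℂ))) a b N).1).2
      have e2 : eval₂ (algebraMap S (Set.Ioo (0 : ℝ) 1 → ℂ)) x' Q t =
          (Q.map ((Pi.evalRingHom (fun _ => ℂ) t).comp
        (algebraMap S (Set.Ioo (0 : ℝ) 1 → ℂ)))).eval (x t) := by
        rw [eval_map]
        exact hom_eval₂ Q (algebraMap S (Set.Ioo (0 : ℝ) 1 → ℂ)) (Pi.evalRingHom (fun _ => ℂ) t) x'
      rw [e2, hQ, e]
      have ha : ((Pi.evalRingHom (fun _ => ℂ) t).comp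
        (algebraMap S (Set.Ioo (0 : ℝ) 1 → ℂ))) a = g2 t / 4 := by
        change evHom (C (1/4)) t * g2 t = _
        simp [evHom]; ring
      rw [ha]
      exact hx t t.2
  have hyi : IsIntegral S y' := by
    have h2i : IsIntegral S (fun s : Set.Ioo (0 : ℝ) 1 => g2 s) :=
      isIntegral_algebraMap (x := (⟨_, h2⟩ : S))
    have h3i : IsIntegral S (fun s : Set.Ioo (0 : ℝ) 1 => g3 s) :=
      isIntegral_algebraMap (x := (⟨_, h3⟩ : S))
    have h4i : IsIntegral S (4 : Set.Ioo (0 : ℝ) 1 → ℂ) := by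
      have := isIntegral_algebraMap (R := S) (A := Set.Ioo (0 : ℝ) 1 → ℂ) (x := (4 : S))
      rwa [map_ofNat] at this
    refine IsIntegral.of_pow (n := 2) (by norm_num) ?_
    have : y' ^ 2 = 4 * x' ^ 3 - (fun s : Set.Ioo (0 : ℝ) 1 => g2 s) * x'
        - (fun s : Set.Ioo (0 : ℝ) 1 => g3 s) := by
      ext t; exact hy t t.2
    rw [this]
    exact ((h4i.mul (hxi.pow 3)).sub (h2i.mul hxi)).sub h3i
  exact ⟨trans_alg hxi, trans_alg hyi⟩

open Filter Topology

lemma P_expand (L : PeriodPair) (z : ℂ) :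
    L.weierstrassP z = L.weierstrassPExcept 0 z + 1 / z ^ 2 := by
  have := L.weierstrassPExcept_add 0 z
  simpa using this.symm

lemma dP_expand (L : PeriodPair) (z : ℂ) :
    L.derivWeierstrassP z = L.derivWeierstrassPExcept 0 z - 2 / z ^ 3 := by
  have := L.derivWeierstrassPExcept_sub 0 z
  simpa using this.symm

lemma countable_lat (L : PeriodPair) : (L.lattice : Set ℂ).Countable := by
  have : Countable L.lattice := L.latticeEquivProd.toEquiv.countable_iff.mpr inferInstance
  exact this

lemma preconn_compl {s : Set ℂ} (hs : s.Countable) : IsPreconnected sᶜ :=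
  (Set.Countable.isConnected_compl_of_one_lt_rank (by simp) hs).isPreconnected

lemma ev_notMem (L : PeriodPair) (x : ℂ) : ∀ᶠ z in 𝓝[≠] x, z ∉ L.lattice := by
  filter_upwards [self_mem_nhdsWithin, mem_nhdsWithin_of_mem_nhds
    (L.compl_lattice_sdiff_singleton_mem_nhds x)] with w hw hw'
  simp_all

lemma ev_notMem' (L : PeriodPair) {x : ℂ} (hx : x ∉ L.lattice) : ∀ᶠ z in 𝓝 x, z ∉ L.lattice :=
  L.isClosed_lattice.isOpen_compl.mem_nhds hx

lemma dP_not_zero (L : PeriodPair) : ¬ ∀ z ∉ L.lattice, L.derivWeierstrassP z = 0 := by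
  intro h
  have h1 : Tendsto (fun z => z ^ 3 * L.derivWeierstrassPExcept 0 z) (𝓝[≠] 0) (𝓝 0) := by
    have : ContinuousAt (fun z => z ^ 3 * L.derivWeierstrassPExcept 0 z) 0 := by
      have := (L.analyticAt_derivWeierstrassPExcept 0).continuousAt
      fun_prop
    have h2 := this.tendsto
    simp only [ne_eq, OfNat.ofNat_ne_zero, not_false_eq_true, zero_pow, zero_mul] at h2
    exact h2.mono_left nhdsWithin_le_nhds
  have h2 : Tendsto (fun z => z ^ 3 * L.derivWeierstrassPExcept 0 z) (𝓝[≠] 0) (𝓝 2) := by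
    refine tendsto_const_nhds.congr' ?_
    filter_upwards [ev_notMem L 0, self_mem_nhdsWithin] with z hz hz0
    have hz0 : z ≠ 0 := hz0
    have := h z hz
    rw [dP_expand] at this
    have h3 : L.derivWeierstrassPExcept 0 z = 2 / z ^ 3 := by linear_combination this
    rw [h3]; field_simp
  have := tendsto_nhds_unique h1 h2
  norm_num at this

lemma hasDerivAt_P (L : PeriodPair) {z : ℂ} (hz : z ∉ L.lattice) :
    HasDerivAt L.weierstrassP (L.derivWeierstrassP z) z := by
  rw [← L.deriv_weierstrassP]
  exact (L.analyticOnNhd_weierstrassP z hz).differentiableAt.hasDerivAt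

lemma hasDerivAt_dP (L : PeriodPair) {z : ℂ} (hz : z ∉ L.lattice) :
    HasDerivAt L.derivWeierstrassP (6 * L.weierstrassP z ^ 2 - L.g₂ / 2) z := by
  have key : ∀ z ∉ L.lattice, L.derivWeierstrassP z *
      (deriv L.derivWeierstrassP z - (6 * L.weierstrassP z ^ 2 - L.g₂ / 2)) = 0 := by
    intro z hz
    have h1 := hasDerivAt_P L hz
    have h2 : HasDerivAt L.derivWeierstrassP (deriv L.derivWeierstrassP z) z :=
      (L.analyticOnNhd_derivWeierstrassP z hz).differentiableAt.hasDerivAt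
    have h3 := h2.pow 2
    have h4 := (((h1.pow 3).const_mul 4).sub (h1.const_mul L.g₂)).sub_const L.g₃
    have h5 := h3.congr_of_eventuallyEq (f₁ := fun z => 4 * L.weierstrassP z ^ 3
      - L.g₂ * L.weierstrassP z - L.g₃) (by
        filter_upwards [ev_notMem' L hz] with w hw
        exact (L.derivWeierstrassP_sq w hw).symm)
    have h6 := h5.unique h4
    simp at h6
    linear_combination h6 / 2
  have hD : AnalyticOnNhd ℂ (fun z => deriv L.derivWeierstrassP z
      - (6 * L.weierstrassP z ^ 2 - L.g₂ / 2)) (L.lattice : Set ℂ)ᶜ := by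
    intro z hz
    have := (L.analyticOnNhd_derivWeierstrassP z hz).deriv
    have := L.analyticOnNhd_weierstrassP z hz
    fun_prop
  rcases AnalyticOnNhd.eq_zero_or_eq_zero_of_mul_eq_zero L.analyticOnNhd_derivWeierstrassP hD key
    (preconn_compl (countable_lat L)) with h | h
  · exact (dP_not_zero L h).elim
  · have h2 : HasDerivAt L.derivWeierstrassP (deriv L.derivWeierstrassP z) z :=
      (L.analyticOnNhd_derivWeierstrassP z hz).differentiableAt.hasDerivAt
    rwa [sub_eq_zero.mp (h z hz)] at h2

lemma ev_P_ne (L : PeriodPair) (w : ℂ) {u : ℂ} (hu : u ∉ L.lattice) :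
    ∀ᶠ z in 𝓝[≠] u, L.weierstrassP z ≠ w := by
  rcases (L.analyticOnNhd_weierstrassP u hu).eventually_eq_or_eventually_ne
    (analyticAt_const (v := w)) with h | h
  · exfalso
    have h1 := L.analyticOnNhd_weierstrassP.eqOn_of_preconnected_of_eventuallyEq
      (analyticOnNhd_const (v := w)) (preconn_compl (countable_lat L)) hu h
    refine dP_not_zero L fun z hz => ?_
    have h2 := (hasDerivAt_const z w).congr_of_eventuallyEq (f₁ := L.weierstrassP) (by
      filter_upwards [ev_notMem' L hz] with y hy using h1 hy)
    exact (hasDerivAt_P L hz).unique h2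
  · exact h

/-- derivative along `u + v = c` vanishes -/
lemma euler_deriv (L : PeriodPair) {c u : ℂ} (hu : u ∉ L.lattice) (hv : c - u ∉ L.lattice)
    (hne : L.weierstrassP u - L.weierstrassP (c - u) ≠ 0) :
    HasDerivAt (fun u => (L.derivWeierstrassP u - L.derivWeierstrassP (c - u)) ^ 2 /
      (4 * (L.weierstrassP u - L.weierstrassP (c - u)) ^ 2)
      - L.weierstrassP u - L.weierstrassP (c - u)) 0 u := by
  have hs : HasDerivAt (fun u : ℂ => c - u) (-1) u := by
    simpa using (hasDerivAt_id u).const_sub c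
  have h1 := hasDerivAt_P L hu
  have h2 := (hasDerivAt_P L hv).comp u hs
  have h3 := hasDerivAt_dP L hu
  have h4 := (hasDerivAt_dP L hv).comp u hs
  have r1 := L.derivWeierstrassP_sq u hu
  have r2 := L.derivWeierstrassP_sq _ hv
  have := (((h3.sub h4).pow 2).div (((h1.sub h2).pow 2).const_mul (4 : ℂ))
    (mul_ne_zero (by norm_num : (4 : ℂ) ≠ 0) (pow_ne_zero 2 hne))).sub h1 |>.sub h2
  refine this.congr_deriv ?_
  simp only [Pi.sub_apply, Function.comp_apply, Pi.pow_apply]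
  generalize L.derivWeierstrassP u = p at *
  generalize L.derivWeierstrassP (c - u) = q at *
  generalize L.weierstrassP u = x at *
  generalize L.weierstrassP (c - u) = y at *
  clear this h1 h2 h3 h4
  field_simp
  push_cast
  have key : (6 * x ^ 2 + 6 * y ^ 2 - L.g₂) * (x - y) - (p ^ 2 - q ^ 2) - 2 * (x - y) ^ 3 = 0 := by
    rw [r1, r2]; ring
  linear_combination 4 * (x - y) * (p - q) * key

lemma addition_local (L : PeriodPair) {c : ℂ} (hc : c ∉ L.lattice) :
    ∀ᶠ u in 𝓝[≠] (0 : ℂ), (L.derivWeierstrassP u - L.derivWeierstrassP (c - u)) ^ 2 =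
      4 * (L.weierstrassP c + L.weierstrassP u + L.weierstrassP (c - u)) *
        (L.weierstrassP u - L.weierstrassP (c - u)) ^ 2 := by
  let r := L.weierstrassPExcept 0
  let s := L.derivWeierstrassPExcept 0
  let y := fun u => L.weierstrassP (c - u)
  let q := fun u => L.derivWeierstrassP (c - u)
  have hr : AnalyticAt ℂ r 0 := L.analyticAt_weierstrassPExcept 0
  have hs : AnalyticAt ℂ s 0 := L.analyticAt_derivWeierstrassPExcept 0
  have hsub : AnalyticAt ℂ (fun u : ℂ => c - u) 0 := by fun_prop
  have hy : AnalyticAt ℂ y 0 := by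
    refine AnalyticAt.fun_comp (g := L.weierstrassP) (f := fun u => c - u) ?_ hsub
    simpa using L.analyticOnNhd_weierstrassP c hc
  have hq : AnalyticAt ℂ q 0 := by
    refine AnalyticAt.fun_comp (g := L.derivWeierstrassP) (f := fun u => c - u) ?_ hsub
    simpa using L.analyticOnNhd_derivWeierstrassP c hc
  let den := fun u : ℂ => 1 + u ^ 2 * (r u - y u)
  have hden : AnalyticAt ℂ den 0 := by fun_prop
  have hden0 : den 0 = 1 := by simp [den]
  let E := fun u : ℂ => (-(1 / 2) * u * (s u - q u) - (r u - y u)) *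
    (2 - 1 / 2 * u ^ 3 * (s u - q u) + u ^ 2 * (r u - y u)) / (den u) ^ 2 - r u - y u
  have hE : AnalyticAt ℂ E 0 := by
    have hd2 : AnalyticAt ℂ (fun u => den u ^ 2) 0 := by fun_prop
    have hn : AnalyticAt ℂ (fun u => (-(1 / 2) * u * (s u - q u) - (r u - y u)) *
      (2 - 1 / 2 * u ^ 3 * (s u - q u) + u ^ 2 * (r u - y u))) 0 := by fun_prop
    exact ((hn.fun_div hd2 (by simp [hden0])).sub hr).sub hy
  have hE0 : E 0 = L.weierstrassP c := by
    simp [E, hden0, r, y]; ring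
  have hdne : ∀ᶠ u in 𝓝[≠] (0 : ℂ), den u ≠ 0 :=
    (hden.continuousAt.eventually_ne (by simp [hden0])).filter_mono nhdsWithin_le_nhds
  have hcu : ∀ᶠ u in 𝓝[≠] (0 : ℂ), c - u ∉ L.lattice := by
    have : Tendsto (fun u : ℂ => c - u) (𝓝 0) (𝓝 c) := by simpa using hsub.continuousAt.tendsto
    exact (this.eventually (ev_notMem' L hc)).filter_mono nhdsWithin_le_nhds
  have hxy : ∀ u ≠ 0, L.weierstrassP u - L.weierstrassP (c - u) = den u / u ^ 2 := by
    intro u hu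
    rw [P_expand L u]
    simp only [den, r, y]
    field_simp
    ring
  have hEE : ∀ᶠ u in 𝓝[≠] (0 : ℂ), E u =
      (L.derivWeierstrassP u - L.derivWeierstrassP (c - u)) ^ 2 /
      (4 * (L.weierstrassP u - L.weierstrassP (c - u)) ^ 2)
      - L.weierstrassP u - L.weierstrassP (c - u) := by
    filter_upwards [self_mem_nhdsWithin, hdne] with u hu0 hd
    have hu0 : u ≠ 0 := hu0
    rw [hxy u hu0, dP_expand L u, P_expand L u]
    change _ = (s u - 2 / u ^ 3 - q u) ^ 2 / _ - (r u + 1 / u ^ 2) - y u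
    simp only [E]
    have hd' : den u = 1 + u ^ 2 * (r u - y u) := rfl
    have h1 : (s u - 2 / u ^ 3 - q u) ^ 2 / (4 * (den u / u ^ 2) ^ 2)
        = (1 - 1 / 2 * u ^ 3 * (s u - q u)) ^ 2 / (u ^ 2 * den u ^ 2) := by
      field_simp
      ring
    have h2 : (1 : ℂ) / u ^ 2 = den u ^ 2 / (u ^ 2 * den u ^ 2) := by field_simp
    have h3 : (-(1 / 2) * u * (s u - q u) - (r u - y u)) *
      (2 - 1 / 2 * u ^ 3 * (s u - q u) + u ^ 2 * (r u - y u)) / (den u) ^ 2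
      = ((1 - 1 / 2 * u ^ 3 * (s u - q u)) ^ 2 - den u ^ 2) / (u ^ 2 * den u ^ 2) := by
      rw [div_eq_div_iff (by positivity) (by positivity)]
      have : (1 - 1 / 2 * u ^ 3 * (s u - q u)) ^ 2 - den u ^ 2 =
        u ^ 2 * ((-(1 / 2) * u * (s u - q u) - (r u - y u)) *
      (2 - 1 / 2 * u ^ 3 * (s u - q u) + u ^ 2 * (r u - y u))) := by rw [hd']; ring
      rw [this]; ring
    rw [h1, h2, h3, sub_div]; ring
  have hdE : ∀ᶠ u in 𝓝[≠] (0 : ℂ), deriv E u = 0 := by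
    filter_upwards [eventually_eventually_nhdsWithin.mpr hEE, self_mem_nhdsWithin, hdne, hcu,
      ev_notMem L 0] with u h hu0 hd hcu hu
    have hu0 : u ≠ 0 := hu0
    rw [isOpen_compl_singleton.nhdsWithin_eq (Set.mem_compl_singleton_iff.mpr hu0)] at h
    have hne : L.weierstrassP u - L.weierstrassP (c - u) ≠ 0 := by
      rw [hxy u hu0]; positivity
    exact ((euler_deriv L hu hcu hne).congr_of_eventuallyEq h).deriv
  have hdE' : ∀ᶠ u in 𝓝 (0 : ℂ), deriv E u = 0 :=
    hE.deriv.frequently_zero_iff_eventually_zero.mp hdE.frequently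
  have hconst : ∀ᶠ u in 𝓝 (0 : ℂ), E u = L.weierstrassP c := by
    obtain ⟨ε, hε, hb⟩ := Metric.eventually_nhds_iff_ball.mp
      (hdE'.and hE.eventually_analyticAt)
    filter_upwards [Metric.ball_mem_nhds 0 hε] with u hu
    rw [← hE0]
    refine (Metric.isOpen_ball (x := (0 : ℂ)) (ε := ε)).is_const_of_deriv_eq_zero
      (convex_ball (0 : ℂ) ε).isPreconnected ?_ ?_ hu (Metric.mem_ball_self hε)
    · intro w hw; exact (hb w hw).2.differentiableAt.differentiableWithinAt
    · intro w hw; exact (hb w hw).1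
  filter_upwards [hEE, hconst.filter_mono nhdsWithin_le_nhds, self_mem_nhdsWithin, hdne]
    with u h1 h2 hu0 hd
  have hu0 : u ≠ 0 := hu0
  have hne : L.weierstrassP u - L.weierstrassP (c - u) ≠ 0 := by
    rw [hxy u hu0]; positivity
  rw [h2] at h1
  rw [h1]
  field_simp
  ring

lemma addition (L : PeriodPair) {u v : ℂ} (hu : u ∉ L.lattice) (hv : v ∉ L.lattice)
    (huv : u + v ∉ L.lattice) : (L.derivWeierstrassP u - L.derivWeierstrassP v) ^ 2 =
      4 * (L.weierstrassP (u + v) + L.weierstrassP u + L.weierstrassP v) *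
        (L.weierstrassP u - L.weierstrassP v) ^ 2 := by
  obtain ⟨c, rfl⟩ : ∃ c, v = c - u := ⟨u + v, by ring⟩
  rw [add_sub_cancel] at huv ⊢
  let s : Set ℂ := L.lattice ∪ (fun z => c - z) '' L.lattice
  have hs : s.Countable := (countable_lat L).union ((countable_lat L).image _)
  have mem : ∀ z ∈ sᶜ, z ∉ L.lattice ∧ c - z ∉ L.lattice := by
    intro z hz
    simp only [s, Set.mem_compl_iff, Set.mem_union, not_or] at hz
    exact ⟨hz.1, fun h => hz.2 ⟨c - z, h, by ring⟩⟩
  have A : ∀ z ∈ sᶜ, AnalyticAt ℂ L.weierstrassP z ∧ AnalyticAt ℂ L.derivWeierstrassP z ∧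
      AnalyticAt ℂ (fun u => L.weierstrassP (c - u)) z ∧
      AnalyticAt ℂ (fun u => L.derivWeierstrassP (c - u)) z := by
    intro z hz
    obtain ⟨h1, h2⟩ := mem z hz
    have hsub : AnalyticAt ℂ (fun u : ℂ => c - u) z := by fun_prop
    exact ⟨L.analyticOnNhd_weierstrassP z h1, L.analyticOnNhd_derivWeierstrassP z h1,
      AnalyticAt.fun_comp (g := L.weierstrassP) (L.analyticOnNhd_weierstrassP _ h2) hsub,
      AnalyticAt.fun_comp (g := L.derivWeierstrassP) (L.analyticOnNhd_derivWeierstrassP _ h2) hsub⟩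
  have hl := addition_local L huv
  have hcu : ∀ᶠ u in 𝓝[≠] (0 : ℂ), c - u ∉ L.lattice := by
    have : Tendsto (fun u : ℂ => c - u) (𝓝 0) (𝓝 c) := by
      have : Continuous (fun u : ℂ => c - u) := by fun_prop
      simpa using this.tendsto 0
    exact (this.eventually (ev_notMem' L huv)).filter_mono nhdsWithin_le_nhds
  obtain ⟨z, hz, hz0, hz1, hz2⟩ := ((eventually_eventually_nhdsWithin.mpr hl).and
    ((eventually_mem_nhdsWithin).and ((ev_notMem L 0).and hcu))).exists
  rw [isOpen_compl_singleton.nhdsWithin_eq hz0] at hz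
  have hzs : z ∈ sᶜ := by
    simp only [s, Set.mem_compl_iff, Set.mem_union, not_or]
    refine ⟨hz1, ?_⟩
    rintro ⟨w, hw, rfl⟩
    exact hz2 (by simpa using hw)
  have hus : u ∈ sᶜ := by
    simp only [s, Set.mem_compl_iff, Set.mem_union, not_or]
    refine ⟨hu, ?_⟩
    rintro ⟨w, hw, rfl⟩
    exact hv (by simpa using hw)
  refine AnalyticOnNhd.eqOn_of_preconnected_of_eventuallyEq (𝕜 := ℂ)
    (f := fun u => (L.derivWeierstrassP u - L.derivWeierstrassP (c - u)) ^ 2)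
    (g := fun u => 4 * (L.weierstrassP c + L.weierstrassP u + L.weierstrassP (c - u)) *
        (L.weierstrassP u - L.weierstrassP (c - u)) ^ 2) ?_ ?_ (preconn_compl hs) hzs hz hus
  · intro w hw
    obtain ⟨h1, h2, h3, h4⟩ := A w hw
    fun_prop
  · intro w hw
    obtain ⟨h1, h2, h3, h4⟩ := A w hw
    fun_prop

lemma product_formula_ne (L : PeriodPair) {u v : ℂ} (hu : u ∉ L.lattice) (hv : v ∉ L.lattice)
    (huv : u + v ∉ L.lattice) (huv' : u - v ∉ L.lattice)
    (hne : L.weierstrassP u ≠ L.weierstrassP v) :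
    L.weierstrassP (u + v) * L.weierstrassP (u - v) * (L.weierstrassP u - L.weierstrassP v) ^ 2 =
      (L.weierstrassP u * L.weierstrassP v + L.g₂ / 4) ^ 2
        + L.g₃ * (L.weierstrassP u + L.weierstrassP v) := by
  have h1 := addition L hu hv huv
  have h2 := addition L hu (v := -v) (by simpa using hv) (by simpa [sub_eq_add_neg] using huv')
  rw [L.derivWeierstrassP_neg, L.weierstrassP_neg, ← sub_eq_add_neg] at h2
  have r1 := L.derivWeierstrassP_sq u hu
  have r2 := L.derivWeierstrassP_sq v hv
  generalize L.derivWeierstrassP u = p at *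
  generalize L.derivWeierstrassP v = q at *
  generalize L.weierstrassP u = x at *
  generalize L.weierstrassP v = y at *
  generalize L.weierstrassP (u + v) = S at *
  generalize L.weierstrassP (u - v) = D at *
  have hne : x - y ≠ 0 := sub_ne_zero.mpr hne
  have e1 : 4 * S * (x - y) ^ 2 = (p - q) ^ 2 - 4 * (x + y) * (x - y) ^ 2 := by
    linear_combination -h1
  have e2 : 4 * D * (x - y) ^ 2 = (p + q) ^ 2 - 4 * (x + y) * (x - y) ^ 2 := by
    linear_combination -h2
  have e3 : (4 * S * (x - y) ^ 2) * (4 * D * (x - y) ^ 2) =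
      (p ^ 2 - q ^ 2) ^ 2 - 8 * (x + y) * (x - y) ^ 2 * (p ^ 2 + q ^ 2)
        + 16 * (x + y) ^ 2 * (x - y) ^ 4 := by
    rw [e1, e2]; ring
  rw [r1, r2] at e3
  have h16 : (16 : ℂ) * (x - y) ^ 2 ≠ 0 := mul_ne_zero (by norm_num) (pow_ne_zero 2 hne)
  apply mul_left_cancel₀ h16
  linear_combination e3

lemma product_formula (L : PeriodPair) {u v : ℂ} (hu : u ∉ L.lattice) (hv : v ∉ L.lattice)
    (huv : u + v ∉ L.lattice) (huv' : u - v ∉ L.lattice) :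
    L.weierstrassP (u + v) * L.weierstrassP (u - v) * (L.weierstrassP u - L.weierstrassP v) ^ 2 =
      (L.weierstrassP u * L.weierstrassP v + L.g₂ / 4) ^ 2
        + L.g₃ * (L.weierstrassP u + L.weierstrassP v) := by
  have c0 := (L.analyticOnNhd_weierstrassP u hu).continuousAt
  have ta : Tendsto (fun z : ℂ => z + v) (𝓝 u) (𝓝 (u + v)) :=
    (by fun_prop : Continuous (fun z : ℂ => z + v)).tendsto u
  have ts : Tendsto (fun z : ℂ => z - v) (𝓝 u) (𝓝 (u - v)) :=
    (by fun_prop : Continuous (fun z : ℂ => z - v)).tendsto u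
  have c1 := (L.analyticOnNhd_weierstrassP _ huv).continuousAt.tendsto.comp ta
  have c2 := (L.analyticOnNhd_weierstrassP _ huv').continuousAt.tendsto.comp ts
  have l1 := ((c1.mul c2).mul ((c0.tendsto.sub_const (L.weierstrassP v)).pow 2)).mono_left
    (nhdsWithin_le_nhds (s := {u}ᶜ))
  have l2 := ((((c0.tendsto.mul_const (L.weierstrassP v)).add_const (L.g₂ / 4)).pow 2).add
    ((c0.tendsto.add_const (L.weierstrassP v)).const_mul L.g₃)).mono_left
    (nhdsWithin_le_nhds (s := {u}ᶜ))
  refine tendsto_nhds_unique_of_eventuallyEq l1 l2 ?_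
  filter_upwards [ev_P_ne L (L.weierstrassP v) hu,
    (ev_notMem' L hu).filter_mono nhdsWithin_le_nhds,
    (ta.eventually (ev_notMem' L huv)).filter_mono nhdsWithin_le_nhds,
    (ts.eventually (ev_notMem' L huv')).filter_mono nhdsWithin_le_nhds] with z h1 h2 h3 h4
  exact product_formula_ne L h2 hv h3 h4 h1

lemma duplication (L : PeriodPair) {u : ℂ} (hu : u ∉ L.lattice) (huu : u + u ∉ L.lattice) :
    L.weierstrassP (u + u) * (4 * L.weierstrassP u ^ 3 - 4 * (L.g₂ / 4) * L.weierstrassP u - L.g₃)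
      = (L.weierstrassP u ^ 2 + L.g₂ / 4) ^ 2 + 2 * L.g₃ * L.weierstrassP u := by
  have c0 := ((L.analyticOnNhd_weierstrassP u hu).continuousAt.tendsto).mono_left
    (nhdsWithin_le_nhds (s := {u}ᶜ))
  have ta : Tendsto (fun z : ℂ => z + u) (𝓝 u) (𝓝 (u + u)) :=
    (by fun_prop : Continuous (fun z : ℂ => z + u)).tendsto u
  have c1 := ((L.analyticOnNhd_weierstrassP _ huu).continuousAt.tendsto.comp ta).mono_left
    (nhdsWithin_le_nhds (s := {u}ᶜ))
  have s1 := (hasDerivAt_P L hu).tendsto_slope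
  have s2 := (hasDerivAt_dP L hu).tendsto_slope
  have l1 := s2.pow 2
  have l2 := (((c1.add c0).add_const (L.weierstrassP u)).const_mul 4).mul (s1.pow 2)
  have key := tendsto_nhds_unique_of_eventuallyEq l1 l2 (by
    filter_upwards [self_mem_nhdsWithin, (ev_notMem' L hu).filter_mono nhdsWithin_le_nhds,
      (ta.eventually (ev_notMem' L huu)).filter_mono nhdsWithin_le_nhds] with z h0 h1 h2
    have h0 : z - u ≠ 0 := sub_ne_zero.mpr h0
    have := addition L h1 hu h2
    simp only [slope_def_field, Function.comp_apply]
    rw [div_pow, div_pow, this]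
    ring)
  have r1 := L.derivWeierstrassP_sq u hu
  rw [r1] at key
  linear_combination -key / 4

lemma torsion_root (L : PeriodPair) {z₀ : ℂ} (hz : z₀ ∉ L.lattice) (K : ℕ)
    (hK : ((K : ℂ) + 1) * z₀ ∈ L.lattice) :
    (mulPQ (L.g₂ / 4) L.g₃ K).1.2.eval (L.weierstrassP z₀) = 0 := by
  set P := (mulPQ (L.g₂ / 4) L.g₃ K).1.1
  set Q := (mulPQ (L.g₂ / 4) L.g₃ K).1.2
  have hev : ∀ᶠ z in 𝓝[≠] z₀, ∀ j ∈ Finset.range (K + 1), ((j : ℂ) + 1) * z ∉ L.lattice := by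
    rw [Filter.eventually_all_finset]
    intro j _
    have hj : (j : ℂ) + 1 ≠ 0 := by exact_mod_cast Nat.succ_ne_zero j
    have : Tendsto (fun z : ℂ => ((j : ℂ) + 1) * z) (𝓝[≠] z₀) (𝓝[≠] (((j : ℂ) + 1) * z₀)) := by
      refine tendsto_nhdsWithin_of_tendsto_nhds_of_eventually_within _ ?_ ?_
      · exact ((by fun_prop : Continuous (fun z : ℂ => ((j : ℂ) + 1) * z)).tendsto z₀).mono_left
          nhdsWithin_le_nhds
      · filter_upwards [self_mem_nhdsWithin] with z hz
        exact fun h => hz (mul_left_cancel₀ hj h)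
    exact this.eventually (ev_notMem L _)
  have hid : ∀ᶠ z in 𝓝[≠] z₀, P.eval (L.weierstrassP z)
      = L.weierstrassP (((K : ℂ) + 1) * z) * Q.eval (L.weierstrassP z) := by
    filter_upwards [hev] with z hz
    have hz' : ∀ j ≤ K, ((j : ℂ) + 1) * z ∉ L.lattice := fun j hj => hz j (by simp; lia)
    have hz1 : z ∉ L.lattice := by simpa using hz' 0 (by lia)
    refine (mulPQ_eval (L.g₂ / 4) L.g₃ (L.weierstrassP z)
      (fun k => L.weierstrassP (((k : ℂ) + 1) * z)) K (by simp) ?_ ?_ K).1 le_rfl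
    · intro h1
      have := duplication L hz1 (by have := hz' 1 h1; push_cast at this; convert this using 1; ring)
      rw [← this]
      congr 2; push_cast; ring
    · intro k hk
      have e1 : (((k + 1 : ℕ) : ℂ) + 1) * z + z = (((k + 2 : ℕ) : ℂ) + 1) * z := by push_cast; ring
      have e2 : (((k + 1 : ℕ) : ℂ) + 1) * z - z = ((k : ℂ) + 1) * z := by push_cast; ring
      have := product_formula L (hz' (k + 1) (by lia)) hz1 (by rw [e1]; exact hz' _ hk)
        (by rw [e2]; exact hz' k (by lia))
      rw [e1, e2] at this
      exact this
  have hK0 : (K : ℂ) + 1 ≠ 0 := by exact_mod_cast Nat.succ_ne_zero K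
  let w := fun z : ℂ => ((K : ℂ) + 1) * (z - z₀)
  have hw : Tendsto w (𝓝[≠] z₀) (𝓝 0) := by
    have := (by fun_prop : Continuous w).tendsto z₀
    simp only [w, sub_self, mul_zero] at this
    exact this.mono_left nhdsWithin_le_nhds
  have c0 := ((L.analyticOnNhd_weierstrassP z₀ hz).continuousAt.tendsto).mono_left
    (nhdsWithin_le_nhds (s := {z₀}ᶜ))
  have lP := (P.continuous.tendsto _).comp c0
  have lQ := (Q.continuous.tendsto _).comp c0
  have lr := (L.analyticAt_weierstrassPExcept 0).continuousAt.tendsto.comp hw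
  have l1 := (hw.pow 2).mul lP
  have l2 := (((hw.pow 2).mul lr).add_const 1).mul lQ
  have key := tendsto_nhds_unique_of_eventuallyEq l1 l2 (by
    filter_upwards [hid, self_mem_nhdsWithin] with z hz hne
    have hw0 : w z ≠ 0 := mul_ne_zero hK0 (sub_ne_zero.mpr hne)
    simp only [Function.comp_apply]
    rw [hz]
    have : L.weierstrassP (((K : ℂ) + 1) * z) = L.weierstrassPExcept 0 (w z) + 1 / w z ^ 2 := by
      rw [← P_expand, ← L.weierstrassP_add_coe (w z) ⟨_, hK⟩]
      congr 1; simp only [w]; ring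
    rw [this]
    field_simp)
  simpa using key.symm

lemma wp_eq (L : PeriodPair) : wp L.ω₁ L.ω₂ = L.weierstrassP := by
  ext z
  have hs := (L.hasSum_weierstrassP z)
  let e : ℤ × ℤ ≃ L.lattice := (L.latticeEquivProd.symm.toEquiv).trans (Equiv.neg _)
  have he : ∀ p, ((e p : L.lattice) : ℂ) = - latPt L.ω₁ L.ω₂ p := by
    intro p
    simp [e, latPt, L.latticeEquiv_symm_apply]
  have hs2 := (e.hasSum_iff.mpr hs)
  rw [← hs2.tsum_eq, hs2.summable.tsum_eq_add_tsum_ite 0]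
  simp only [Function.comp_apply, he]
  unfold wp
  congr 1
  · simp [latPt]
  · refine tsum_congr fun p => ?_
    split_ifs <;> simp

lemma G_eq (L : PeriodPair) (n : ℕ) (hn : n ≠ 0) :
    (∑' p : ℤ × ℤ, if p = 0 then 0 else ((latPt L.ω₁ L.ω₂ p) ^ n)⁻¹) = L.G n := by
  unfold PeriodPair.G
  rw [← L.latticeEquivProd.symm.toEquiv.tsum_eq]
  refine tsum_congr fun p => ?_
  have : ((L.latticeEquivProd.symm.toEquiv p : L.lattice) : ℂ) = latPt L.ω₁ L.ω₂ p :=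
    L.latticeEquiv_symm_apply p
  rw [this]
  split_ifs with h
  · subst h; simp [latPt, hn]
  · rfl

lemma core (ω₁ ω₂ v : ℝ → ℂ)
    (hindep : ∀ t ∈ Set.Ioo (0 : ℝ) 1, LinearIndependent ℝ ![ω₁ t, ω₂ t])
    (hg2 : AlgebraicOverCt (fun t => g2 (ω₁ t) (ω₂ t)))
    (hg3 : AlgebraicOverCt (fun t => g3 (ω₁ t) (ω₂ t))) (K : ℕ)
    (hv : ∀ t (ht : t ∈ Set.Ioo (0 : ℝ) 1), v t ∉ (⟨ω₁ t, ω₂ t, hindep t ht⟩ : PeriodPair).lattice)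
    (hK : ∀ t (ht : t ∈ Set.Ioo (0 : ℝ) 1),
      ((K : ℂ) + 1) * v t ∈ (⟨ω₁ t, ω₂ t, hindep t ht⟩ : PeriodPair).lattice) :
    AlgebraicOverCt (fun t => wp (ω₁ t) (ω₂ t) (v t)) ∧
      AlgebraicOverCt (fun t => deriv (wp (ω₁ t) (ω₂ t)) (v t)) := by
  refine algebraic_final _ _ _ _ K hg2 hg3 ?_ ?_
  all_goals
    intro t ht
    let L : PeriodPair := ⟨ω₁ t, ω₂ t, hindep t ht⟩
    have e1 : wp (ω₁ t) (ω₂ t) = L.weierstrassP := wp_eq L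
    have e2 : g2 (ω₁ t) (ω₂ t) = L.g₂ := congrArg (60 * ·) (G_eq L 4 (by norm_num))
    have e3 : g3 (ω₁ t) (ω₂ t) = L.g₃ := congrArg (140 * ·) (G_eq L 6 (by norm_num))
    simp only [e1, e2, e3]
  · exact torsion_root L (hv t ht) K (hK t ht)
  · rw [L.deriv_weierstrassP]
    exact L.derivWeierstrassP_sq _ (hv t ht)

end Helpers

/-- Let `ω₁, ω₂ : (0,1) → ℂ` be continuous, `ℝ`-linearly independent
for each `t`, and assume `g₂(t), g₃(t)` are algebraic over `ℂ(t)`.  Then for every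
rational `λ` which is not an integer, `t ↦ ℘(λω₁(t), t)` and `t ↦ ℘'(λω₁(t), t)` are
algebraic over `ℂ(t)`, and similarly with `ω₁` replaced by `ω₂`. -/
theorem statement11 (ω₁ ω₂ : ℝ → ℂ)
    (hc1 : ContinuousOn ω₁ (Set.Ioo 0 1)) (hc2 : ContinuousOn ω₂ (Set.Ioo 0 1))
    (hindep : ∀ t ∈ Set.Ioo (0 : ℝ) 1, LinearIndependent ℝ ![ω₁ t, ω₂ t])
    (hg2 : AlgebraicOverCt (fun t => g2 (ω₁ t) (ω₂ t)))
    (hg3 : AlgebraicOverCt (fun t => g3 (ω₁ t) (ω₂ t)))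
    (lam : ℚ) (hlam : ¬ ∃ n : ℤ, lam = (n : ℚ)) :
    (AlgebraicOverCt (fun t => wp (ω₁ t) (ω₂ t) ((lam : ℂ) * ω₁ t)) ∧
      AlgebraicOverCt (fun t => deriv (wp (ω₁ t) (ω₂ t)) ((lam : ℂ) * ω₁ t))) ∧
    (AlgebraicOverCt (fun t => wp (ω₁ t) (ω₂ t) ((lam : ℂ) * ω₂ t)) ∧
      AlgebraicOverCt (fun t => deriv (wp (ω₁ t) (ω₂ t)) ((lam : ℂ) * ω₂ t))) := by
  have hden : lam.den ≠ 1 := fun h => hlam ⟨lam.num, (Rat.coe_int_num_of_den_eq_one h).symm⟩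
  obtain ⟨K, hK⟩ : ∃ K, lam.den = K + 1 := Nat.exists_eq_succ_of_ne_zero lam.den_ne_zero
  have hmul : ((K : ℂ) + 1) * (lam : ℂ) = (lam.num : ℂ) := by
    have h : (lam.den : ℚ) * lam = lam.num := Rat.den_mul_eq_num lam
    have h2 : ((lam.den : ℚ) : ℂ) * (lam : ℂ) = ((lam.num : ℚ) : ℂ) := by rw [← h]; push_cast; rfl
    rw [hK] at h2
    push_cast at h2
    exact h2
  constructor
  · refine core ω₁ ω₂ _ hindep hg2 hg3 K (fun t ht h => hden ?_) (fun t ht => ?_)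
    · refine ((PeriodPair.mul_ω₁_add_mul_ω₂_mem_lattice (L := ⟨ω₁ t, ω₂ t, hindep t ht⟩)
        (α := lam) (β := 0)).mp ?_).1
      simpa using h
    · rw [PeriodPair.mem_lattice]
      refine ⟨lam.num, 0, ?_⟩
      rw [← mul_assoc, hmul]; simp
  · refine core ω₁ ω₂ _ hindep hg2 hg3 K (fun t ht h => hden ?_) (fun t ht => ?_)
    · refine ((PeriodPair.mul_ω₁_add_mul_ω₂_mem_lattice (L := ⟨ω₁ t, ω₂ t, hindep t ht⟩)
        (α := 0) (β := lam)).mp ?_).2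
      simpa using h
    · rw [PeriodPair.mem_lattice]
      refine ⟨0, lam.num, ?_⟩
      rw [← mul_assoc, hmul]; simp

end WeierstrassElliptic
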